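/- arXiv:2409.10979 — 6 statements merged into one kernel-verified Lean document; each statement's English description precedes it below -/
import Mathlib

section
/- Let n be a positive integer and let x ∈ 𝔽₂ⁿ be a vector whose Hamming weight satisfies 0 < wt_H(x) < n. Then wt_H(x) + 1 ≤ wt_sp(x) ≤ 2·wt_H(x). -/
/-- Hamming weight of a binary vector. -/
def wtH {n : ℕ} (x : Fin n → ZMod 2) : ℕ :=
  (Finset.univ.filter fun i => x i ≠ 0).card

/-- Symbol-pair weight of a binary vector (indices mod n). -/
def wtSp {n : ℕ} [NeZero n] (x : Fin n → ZMod 2) : ℕ :=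
  (Finset.univ.filter fun i => (x i, x (i + 1)) ≠ (0, 0)).card

/-- Symplectic weight of a pair (a | b). -/
def wtSymp {n : ℕ} (a b : Fin n → ZMod 2) : ℕ :=
  (Finset.univ.filter fun i => (a i, b i) ≠ (0, 0)).card

/-- Left cyclic shift: (c₀, c₁, …, c_{n−1}) ↦ (c₁, …, c_{n−1}, c₀). -/
def L {n : ℕ} [NeZero n] (c : Fin n → ZMod 2) : Fin n → ZMod 2 :=
  fun i => c (i + 1)

/-- Right cyclic shift: (a₀, a₁, …, a_{n−1}) ↦ (a_{n−1}, a₀, …, a_{n−2}). -/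
def R {n : ℕ} [NeZero n] (a : Fin n → ZMod 2) : Fin n → ZMod 2 :=
  fun i => a (i - 1)

/-- Minimum Hamming distance of a code: min Hamming weight of a nonzero codeword. -/
noncomputable def dH {n : ℕ} (C : Submodule (ZMod 2) (Fin n → ZMod 2)) : ℕ :=
  sInf (wtH '' {x | x ∈ C ∧ x ≠ 0})

/-- Minimum symbol-pair distance of a code: min symbol-pair weight of a nonzero codeword. -/
noncomputable def dSp {n : ℕ} [NeZero n] (C : Submodule (ZMod 2) (Fin n → ZMod 2)) : ℕ :=
  sInf (wtSp '' {x | x ∈ C ∧ x ≠ 0})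

/-- The dual code w.r.t. the standard bilinear form ⟨x, y⟩ = ∑ i, x i * y i. -/
def dualCode {n : ℕ} (C : Submodule (ZMod 2) (Fin n → ZMod 2)) :
    Submodule (ZMod 2) (Fin n → ZMod 2) where
  carrier := {x | ∀ y ∈ C, ∑ i, x i * y i = 0}
  add_mem' := by
    intro a b ha hb y hy
    simp only [Pi.add_apply, add_mul, Finset.sum_add_distrib, ha y hy, hb y hy, add_zero]
  zero_mem' := by
    intro y hy
    simp
  smul_mem' := by
    intro c a ha y hy
    simp only [Pi.smul_apply, smul_eq_mul, mul_assoc, ← Finset.mul_sum, ha y hy, mul_zero]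

/-- A linear code is cyclic if it is closed under cyclic shifts. -/
def IsCyclicCode {n : ℕ} [NeZero n] (C : Submodule (ZMod 2) (Fin n → ZMod 2)) : Prop :=
  ∀ x ∈ C, R x ∈ C

/-- for 0 < wt_H(x) < n, wt_H(x) + 1 ≤ wt_sp(x) ≤ 2·wt_H(x). -/
theorem wtH_add_one_le_wtSp_le_two_mul_wtH (n : ℕ) [NeZero n] (x : Fin n → ZMod 2)
    (h0 : 0 < wtH x) (hn : wtH x < n) :
    wtH x + 1 ≤ wtSp x ∧ wtSp x ≤ 2 * wtH x := by
  constructor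
  · have hsub : (Finset.univ.filter fun i => x i ≠ 0) ⊂
        (Finset.univ.filter fun i => (x i, x (i + 1)) ≠ (0, 0)) := by
      rw [Finset.ssubset_iff_subset_ne]
      refine ⟨?_, ?_⟩
      · intro i hi
        simp only [Finset.mem_filter, Finset.mem_univ, true_and, ne_eq, Prod.mk.injEq] at hi ⊢
        tauto
      · intro heq
        have step : ∀ i, x i = 0 → x (i + 1) = 0 := by
          intro i hi
          have := Finset.ext_iff.mp heq i
          simp only [Finset.mem_filter, Finset.mem_univ, true_and, ne_eq, Prod.mk.injEq] at this
          tauto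
        obtain ⟨i0, hi0⟩ : ∃ i, x i = 0 := by
          by_contra hcon
          push Not at hcon
          have : wtH x = n := by
            unfold wtH
            rw [Finset.filter_true_of_mem (fun i _ => hcon i)]
            simp
          omega
        have all : ∀ k : ℕ, x (i0 + Fin.ofNat n k) = 0 := by
          intro k
          induction k with
          | zero => simpa using hi0
          | succ k ih =>
            have h := step _ ih
            have e : i0 + Fin.ofNat n k + 1 = i0 + Fin.ofNat n (k + 1) := by
              rw [add_assoc]
              congr 1
              ext
              simp [Fin.val_add]
            rwa [e] at h
        obtain ⟨j, hj⟩ := Finset.card_pos.mp h0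
        have hj' := (Finset.mem_filter.mp hj).2
        apply hj'
        have h := all (j - i0).val
        have e : i0 + Fin.ofNat n (j - i0).val = j := by
          have e1 : Fin.ofNat n (j - i0).val = j - i0 := by
            ext
            simp
          rw [e1]
          exact add_sub_cancel i0 j
        rwa [e] at h
    exact Finset.card_lt_card hsub
  · have hT : (Finset.univ.filter fun i => x (i + 1) ≠ 0).card = wtH x := by
      unfold wtH
      refine Finset.card_bij (fun i _ => i + 1) ?_ ?_ ?_
      · intro i hi
        simpa using hi
      · intro a _ b _ h
        exact add_right_cancel h
      · intro b hb
        exact ⟨b - 1, by simpa using hb, sub_add_cancel b 1⟩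
    have hsub : (Finset.univ.filter fun i => (x i, x (i + 1)) ≠ (0, 0)) ⊆
        (Finset.univ.filter fun i => x i ≠ 0) ∪ (Finset.univ.filter fun i => x (i + 1) ≠ 0) := by
      intro i hi
      simp only [Finset.mem_union, Finset.mem_filter, Finset.mem_univ, true_and, ne_eq,
        Prod.mk.injEq] at hi ⊢
      tauto
    have h1 := (Finset.card_le_card hsub).trans (Finset.card_union_le _ _)
    rw [hT] at h1
    unfold wtSp
    have h2 : (Finset.univ.filter fun i => x i ≠ 0).card = wtH x := rfl
    omega
end

section
/- Let C ⊆ 𝔽₂ⁿ be a nonzero binary linear code whose minimum Hamming distance satisfies d_H(C) < n. Then d_H(C) + 1 ≤ d_sp(C) ≤ 2·d_H(C), where d_H(C) and d_sp(C) denote respectively the minimum Hamming weight and the minimum symbol-pair weight over all nonzero codewords of C. -/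
theorem wtSp_le_two_mul_aux {n : ℕ} [NeZero n] (x : Fin n → ZMod 2) :
    wtSp x ≤ 2 * wtH x := by
  have h2 : (Finset.univ.filter fun i => x (i + 1) ≠ 0).card = wtH x := by
    unfold wtH
    refine Finset.card_bij (fun i _ => i + 1) ?_ ?_ ?_
    · intro i hi
      simpa using hi
    · intro a _ b _ h
      exact add_right_cancel h
    · intro b hb
      exact ⟨b - 1, by simpa using hb, by simp⟩
  have h1 : (Finset.univ.filter fun i => (x i, x (i + 1)) ≠ (0, 0)) ⊆
      (Finset.univ.filter fun i => x i ≠ 0) ∪ (Finset.univ.filter fun i => x (i + 1) ≠ 0) := by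
    intro i hi
    simp only [Finset.mem_filter, Finset.mem_union, Finset.mem_univ, true_and, ne_eq,
      Prod.mk.injEq] at hi ⊢
    tauto
  have h3 := (Finset.card_le_card h1).trans (Finset.card_union_le _ _)
  rw [h2] at h3
  unfold wtSp
  unfold wtH at h3 ⊢
  omega

theorem wtH_subset_aux {n : ℕ} [NeZero n] (x : Fin n → ZMod 2) :
    (Finset.univ.filter fun i => x i ≠ 0) ⊆
      (Finset.univ.filter fun i => (x i, x (i + 1)) ≠ (0, 0)) := by
  intro i hi
  simp only [Finset.mem_filter, Finset.mem_univ, true_and, ne_eq, Prod.mk.injEq] at hi ⊢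
  tauto

open scoped Fin.CommRing in
theorem all_ne_zero_aux {n : ℕ} [NeZero n] (x : Fin n → ZMod 2) (hx : x ≠ 0)
    (h : ∀ i, x (i + 1) ≠ 0 → x i ≠ 0) (j : Fin n) : x j ≠ 0 := by
  obtain ⟨i, hi⟩ := Function.ne_iff.mp hx
  have key : ∀ k : ℕ, x (i - (k : Fin n)) ≠ 0 := by
    intro k
    induction k with
    | zero => simpa using hi
    | succ k ih =>
      apply h
      have : i - ((k + 1 : ℕ) : Fin n) + 1 = i - (k : Fin n) := by
        push_cast
        ring
      rw [this]
      exact ih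
  have := key (i - j).val
  rwa [Fin.cast_val_eq_self, sub_sub_cancel] at this

theorem wtH_lt_wtSp_aux {n : ℕ} [NeZero n] (x : Fin n → ZMod 2) (hx : x ≠ 0)
    (hn : wtH x < n) : wtH x < wtSp x := by
  by_contra hlt
  have heq := Finset.eq_of_subset_of_card_le (wtH_subset_aux x) (not_lt.mp hlt)
  have hall := all_ne_zero_aux x hx (by
    intro i hi
    have : i ∈ (Finset.univ.filter fun i => (x i, x (i + 1)) ≠ (0, 0)) := by
      simp only [Finset.mem_filter, Finset.mem_univ, true_and, ne_eq, Prod.mk.injEq]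
      tauto
    rw [← heq] at this
    simpa using this)
  have : wtH x = n := by
    unfold wtH
    rw [Finset.filter_true_of_mem (fun i _ => hall i)]
    simp
  omega

/-- for a nonzero code C with d_H(C) < n, d_H(C) + 1 ≤ d_sp(C) ≤ 2·d_H(C). -/
theorem dH_add_one_le_dSp_le_two_mul_dH (n : ℕ) [NeZero n]
    (C : Submodule (ZMod 2) (Fin n → ZMod 2)) (hC : C ≠ ⊥) (hd : dH C < n) :
    dH C + 1 ≤ dSp C ∧ dSp C ≤ 2 * dH C := by
  obtain ⟨c, hc, hc0⟩ := Submodule.exists_mem_ne_zero_of_ne_bot hC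
  have hne : {x | x ∈ C ∧ x ≠ 0}.Nonempty := ⟨c, hc, hc0⟩
  obtain ⟨y, hy, hyw⟩ : dH C ∈ wtH '' {x | x ∈ C ∧ x ≠ 0} := Nat.sInf_mem (hne.image _)
  obtain ⟨z, hz, hzw⟩ : dSp C ∈ wtSp '' {x | x ∈ C ∧ x ≠ 0} := Nat.sInf_mem (hne.image _)
  have h1 : dH C ≤ wtH z := Nat.sInf_le ⟨z, hz, rfl⟩
  have h2 : dSp C ≤ wtSp y := Nat.sInf_le ⟨y, hy, rfl⟩
  have h3 := wtSp_le_two_mul_aux y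
  refine ⟨?_, by omega⟩
  by_cases hzn : wtH z < n
  · have := wtH_lt_wtSp_aux z hz.2 hzn
    omega
  · have : wtH z ≤ wtSp z := Finset.card_le_card (wtH_subset_aux z)
    omega
end

section
/- Let C ⊆ 𝔽₂ⁿ be a binary linear code with parity-check matrix H having rows h₁, …, h_{n−k}, and let t_p be a nonnegative integer with d_sp(C) ≥ 2·t_p + 1 (so C can correct up to t_p symbol-pair errors). Then the map sending a pair-error vector e ∈ (𝔽₂ × 𝔽₂)ⁿ to the pair (s^p(e), s^n(e)) of its symbol-pair syndrome and its neighbour-symbol syndrome is injective on the set of pair-error vectors of pair weight at most t_p; equivalently, two pair-error vectors of pair weight at most t_p with equal symbol-pair syndromes and equal neighbour-symbol syndromes are equal. -/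
/-- Pair weight of a pair-error vector e ∈ (𝔽₂ × 𝔽₂)ⁿ. -/
def pairWt {n : ℕ} (e : Fin n → ZMod 2 × ZMod 2) : ℕ :=
  (Finset.univ.filter fun i => e i ≠ (0, 0)).card

/-- Symbol-pair syndrome of a pair-error vector w.r.t. a parity-check matrix H:
its j-th entry is (∑ i, ◁eᵢ · (h_j)ᵢ, ∑ i, ▷eᵢ · (h_j)_{i+1}). -/
def pairSyndrome {n m : ℕ} [NeZero n] (H : Fin m → Fin n → ZMod 2)
    (e : Fin n → ZMod 2 × ZMod 2) : Fin m → ZMod 2 × ZMod 2 :=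
  fun j => (∑ i, (e i).1 * H j i, ∑ i, (e i).2 * H j (i + 1))

/-- Neighbour-symbol syndrome: (◁e₀ + ▷e_{n−1}, ◁e₁ + ▷e₀, …, ◁e_{n−1} + ▷e_{n−2}). -/
def nbrSyndrome {n : ℕ} [NeZero n] (e : Fin n → ZMod 2 × ZMod 2) : Fin n → ZMod 2 :=
  fun i => (e i).1 + (e (i - 1)).2

/-- if d_sp(C) ≥ 2t_p + 1, then (s^p, s^n) is injective on pair-error
vectors of pair weight ≤ t_p. -/
theorem pair_syndrome_decoding (n m : ℕ) [NeZero n]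
    (C : Submodule (ZMod 2) (Fin n → ZMod 2))
    (H : Fin m → Fin n → ZMod 2)
    (hH : ∀ x, x ∈ C ↔ ∀ j, ∑ i, H j i * x i = 0)
    (tp : ℕ) (hd : 2 * tp + 1 ≤ dSp C)
    (e₁ e₂ : Fin n → ZMod 2 × ZMod 2)
    (h₁ : pairWt e₁ ≤ tp) (h₂ : pairWt e₂ ≤ tp)
    (hp : pairSyndrome H e₁ = pairSyndrome H e₂)
    (hs : nbrSyndrome e₁ = nbrSyndrome e₂) :
    e₁ = e₂ := by
  have hx : ∀ i, (e₁ (i + 1)).1 - (e₂ (i + 1)).1 = (e₂ i).2 - (e₁ i).2 := by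
    intro i
    have h := congrFun hs (i + 1)
    simp only [nbrSyndrome, add_sub_cancel_right] at h
    linear_combination h
  set x : Fin n → ZMod 2 := fun i => (e₁ i).1 - (e₂ i).1 with hxdef
  have hxC : x ∈ C := by
    rw [hH]
    intro j
    have h := congrArg Prod.fst (congrFun hp j)
    simp only [pairSyndrome] at h
    have h' : ∑ i, H j i * x i = ∑ i, (e₁ i).1 * H j i - ∑ i, (e₂ i).1 * H j i := by
      rw [← Finset.sum_sub_distrib]
      refine Finset.sum_congr rfl fun i _ => ?_
      simp only [hxdef]
      ring
    rw [h', h, sub_self]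
  have hw : wtSp x ≤ pairWt e₁ + pairWt e₂ := by
    unfold wtSp pairWt
    refine le_trans (Finset.card_le_card ?_) (Finset.card_union_le _ _)
    intro i hi
    simp only [Finset.mem_union, Finset.mem_filter, Finset.mem_univ, true_and] at hi ⊢
    by_contra hcon
    rw [not_or, not_not, not_not] at hcon
    apply hi
    have h1 : x i = 0 := by simp [hxdef, hcon.1, hcon.2]
    have h2 : x (i + 1) = 0 := by
      have := hx i
      rw [hcon.1, hcon.2] at this
      simpa [hxdef] using this
    rw [h1, h2]
  have hx0 : x = 0 := by
    by_contra hne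
    have : dSp C ≤ wtSp x := Nat.sInf_le ⟨x, ⟨hxC, hne⟩, rfl⟩
    omega
  funext i
  have h0 : ∀ i, (e₁ i).1 - (e₂ i).1 = 0 := fun i => congrFun hx0 i
  refine Prod.ext (sub_eq_zero.mp (h0 i)) ?_
  have h := hx i
  rw [h0 (i + 1)] at h
  exact (sub_eq_zero.mp h.symm).symm
end

section
/- Let C ⊆ 𝔽₂ⁿ be a binary cyclic linear code satisfying C^⊥ ⊆ C, and write d_H := d_H(C) and d_p := d_sp(C). Suppose (a₁ | b₁) and (a₂ | b₂) are error pairs in 𝔽₂ⁿ × 𝔽₂ⁿ such that for each i ∈ {1,2}: wt_symp(a_i | b_i) ≤ ⌊(d_p − 1)/2⌋ and wt_H(b_i + R(a_i)) ≤ ⌊(d_H − 1)/2⌋. If the two errors have the same CSS syndrome, i.e. a₁ + a₂ ∈ C and b₁ + b₂ ∈ C, then a₁ = a₂ and b₁ = b₂. (That is, the CSS code built from C and C^⊥ corrects every error (a | b) with wt_symp(a | b) ≤ ⌊(d_p − 1)/2⌋ and wt_H(b + R(a)) ≤ ⌊(d_H − 1)/2⌋.) -/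
theorem wtH_add_le_aux {n : ℕ} (x y : Fin n → ZMod 2) : wtH (x + y) ≤ wtH x + wtH y := by
  unfold wtH
  refine le_trans (Finset.card_le_card ?_) (Finset.card_union_le _ _)
  intro i hi
  simp only [Finset.mem_filter, Finset.mem_univ, true_and, Finset.mem_union, Pi.add_apply] at hi ⊢
  by_contra! h
  exact hi (by rw [h.1, h.2, add_zero])

theorem wtSymp_add_le_aux {n : ℕ} (x y z w : Fin n → ZMod 2) :
    wtSymp (x + z) (y + w) ≤ wtSymp x y + wtSymp z w := by
  unfold wtSymp
  refine le_trans (Finset.card_le_card ?_) (Finset.card_union_le _ _)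
  intro i hi
  simp only [Finset.mem_filter, Finset.mem_univ, true_and, Finset.mem_union, Pi.add_apply,
    ne_eq, Prod.mk.injEq] at hi ⊢
  by_contra! h
  exact hi ⟨by rw [h.1.1, h.2.1, add_zero], by rw [h.1.2, h.2.2, add_zero]⟩

theorem wtSp_le_wtSymp_aux {n : ℕ} [NeZero n] (x : Fin n → ZMod 2) :
    wtSp x ≤ wtSymp x (R x) := by
  unfold wtSp wtSymp
  refine Finset.card_le_card_of_injOn (fun i => i + 1) ?_ ?_
  · intro i hi
    simp only [Finset.coe_filter, Finset.mem_univ, true_and, Set.mem_setOf_eq, R,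
      ne_eq, Prod.mk.injEq, add_sub_cancel_right] at hi ⊢
    tauto
  · intro i _ j _ h
    exact add_right_cancel h

theorem wtH_zero_aux {n : ℕ} (x : Fin n → ZMod 2) (h : wtH x = 0) : x = 0 := by
  unfold wtH at h
  rw [Finset.card_eq_zero, Finset.filter_eq_empty_iff] at h
  funext i
  simpa using h (Finset.mem_univ i)

theorem wtSp_zero_aux {n : ℕ} [NeZero n] (x : Fin n → ZMod 2) (h : wtSp x = 0) : x = 0 := by
  unfold wtSp at h
  rw [Finset.card_eq_zero, Finset.filter_eq_empty_iff] at h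
  funext i
  have := h (Finset.mem_univ i)
  simp only [ne_eq, Prod.mk.injEq, not_not] at this
  exact this.1

theorem eq_of_add_zero_aux {n : ℕ} (x y : Fin n → ZMod 2) (h : x + y = 0) : x = y := by
  funext i
  have := congrFun h i
  exact CharTwo.add_eq_zero.mp this

/-- the CSS code from a dual-containing cyclic code C corrects every error
(a | b) with wt_symp(a|b) ≤ ⌊(d_p−1)/2⌋ and wt_H(b + R(a)) ≤ ⌊(d_H−1)/2⌋. -/
theorem css_symbol_pair_decoder (n : ℕ) [NeZero n]
    (C : Submodule (ZMod 2) (Fin n → ZMod 2))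
    (hcyc : IsCyclicCode C) (hdual : dualCode C ≤ C)
    (a₁ b₁ a₂ b₂ : Fin n → ZMod 2)
    (h₁s : wtSymp a₁ b₁ ≤ (dSp C - 1) / 2)
    (h₁h : wtH (b₁ + R a₁) ≤ (dH C - 1) / 2)
    (h₂s : wtSymp a₂ b₂ ≤ (dSp C - 1) / 2)
    (h₂h : wtH (b₂ + R a₂) ≤ (dH C - 1) / 2)
    (hsa : a₁ + a₂ ∈ C) (hsb : b₁ + b₂ ∈ C) :
    a₁ = a₂ ∧ b₁ = b₂ := by
  have key : (b₁ + b₂) + R (a₁ + a₂) = 0 := by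
    by_contra hne
    have hle : dH C ≤ wtH ((b₁ + b₂) + R (a₁ + a₂)) :=
      Nat.sInf_le ⟨_, ⟨C.add_mem hsb (hcyc _ hsa), hne⟩, rfl⟩
    have e : (b₁ + b₂) + R (a₁ + a₂) = (b₁ + R a₁) + (b₂ + R a₂) := by
      funext i
      simp only [Pi.add_apply, R]
      ring
    have h1 := wtH_add_le_aux (b₁ + R a₁) (b₂ + R a₂)
    rw [← e] at h1
    exact hne (wtH_zero_aux _ (by omega))
  have hb := eq_of_add_zero_aux _ _ key
  have ha : a₁ + a₂ = 0 := by
    by_contra hne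
    have hle : dSp C ≤ wtSp (a₁ + a₂) := Nat.sInf_le ⟨_, ⟨hsa, hne⟩, rfl⟩
    have h1 := wtSymp_add_le_aux a₁ b₁ a₂ b₂
    have h2 := wtSp_le_wtSymp_aux (a₁ + a₂)
    rw [← hb] at h2
    exact hne (wtSp_zero_aux _ (by omega))
  refine ⟨eq_of_add_zero_aux _ _ ha, eq_of_add_zero_aux _ _ ?_⟩
  rw [hb, ha]
  rfl
end

section
/- Let C ⊆ 𝔽₂ⁿ be a nonzero binary cyclic linear code whose minimum Hamming distance satisfies 0 < d_H(C) < n. Then its minimum symbol-pair distance satisfies d_sp(C) ≥ (3/2)·d_H(C), i.e. 2·d_sp(C) ≥ 3·d_H(C). -/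
theorem wtH_R_eq {n : ℕ} [NeZero n] (x : Fin n → ZMod 2) : wtH (R x) = wtH x := by
  unfold wtH R
  refine Finset.card_bij' (fun i _ => i - 1) (fun i _ => i + 1) ?_ ?_ ?_ ?_ <;> simp

theorem wtSp_eq_R {n : ℕ} [NeZero n] (x : Fin n → ZMod 2) :
    wtSp x = (Finset.univ.filter fun i => (R x i, x i) ≠ (0, 0)).card := by
  unfold wtSp R
  refine Finset.card_bij' (fun i _ => i + 1) (fun i _ => i - 1) ?_ ?_ ?_ ?_ <;> simp

theorem two_wtSp {n : ℕ} [NeZero n] (x : Fin n → ZMod 2) :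
    2 * wtSp x = wtH x + wtH (R x) + wtH (R x + x) := by
  rw [wtSp_eq_R]
  unfold wtH
  simp only [Finset.card_filter, Finset.mul_sum, ← Finset.sum_add_distrib]
  refine Finset.sum_congr rfl fun i _ => ?_
  rw [Pi.add_apply]
  generalize R x i = a
  generalize x i = b
  revert a b
  decide

theorem const_of_R_add {n : ℕ} [NeZero n] (x : Fin n → ZMod 2) (h : R x + x = 0)
    (i : Fin n) : x i = x 0 := by
  have hs : ∀ i, x (i + 1) = x i := by
    intro i
    have h1 := congrFun h (i + 1)
    simp only [R, Pi.add_apply, Pi.zero_apply, add_sub_cancel_right] at h1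
    exact (CharTwo.add_eq_zero.mp h1).symm
  have hk : ∀ k : ℕ, ∀ hk : k < n, x ⟨k, hk⟩ = x 0 := by
    intro k
    induction k with
    | zero => intro _; rfl
    | succ k ih =>
      intro hk
      rw [← ih (by omega), ← hs ⟨k, _⟩]
      congr 1
      apply Fin.ext
      have h1 : 1 % n = 1 := Nat.mod_eq_of_lt (by omega)
      simp [Fin.val_add, h1, Nat.mod_eq_of_lt hk]
  exact hk i.val i.isLt

theorem wtSp_le_n {n : ℕ} [NeZero n] (x : Fin n → ZMod 2) : wtSp x ≤ n := by
  unfold wtSp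
  exact (Finset.card_le_univ _).trans (by simp)

theorem full_of_R_add {n : ℕ} [NeZero n] (x : Fin n → ZMod 2) (h : R x + x = 0)
    (hx : x ≠ 0) : wtH x = n ∧ wtSp x = n := by
  have hc := const_of_R_add x h
  have h0 : x 0 ≠ 0 := fun h0 => hx (funext fun i => (hc i).trans h0)
  have ha : ∀ i, x i ≠ 0 := fun i => by rw [hc i]; exact h0
  unfold wtH wtSp
  constructor <;> simp [ha]

theorem dH_le_wtH {n : ℕ} {C : Submodule (ZMod 2) (Fin n → ZMod 2)} {x : Fin n → ZMod 2}
    (hx : x ∈ C) (h : x ≠ 0) : dH C ≤ wtH x :=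
  Nat.sInf_le ⟨x, ⟨hx, h⟩, rfl⟩

theorem three_dH_le {n : ℕ} [NeZero n] {C : Submodule (ZMod 2) (Fin n → ZMod 2)}
    (hcyc : IsCyclicCode C) {x : Fin n → ZMod 2} (hx : x ∈ C) (h : x ≠ 0)
    (hr : R x + x ≠ 0) : 3 * dH C ≤ 2 * wtSp x := by
  have h1 := dH_le_wtH hx h
  have h2 := dH_le_wtH (C.add_mem (hcyc x hx) hx) hr
  rw [two_wtSp, wtH_R_eq]
  omega

/-- for a nonzero cyclic code C with 0 < d_H(C) < n, 2·d_sp(C) ≥ 3·d_H(C). -/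
theorem cyclic_dSp_ge_three_halves_dH (n : ℕ) [NeZero n]
    (C : Submodule (ZMod 2) (Fin n → ZMod 2)) (hcyc : IsCyclicCode C)
    (hC : C ≠ ⊥) (h0 : 0 < dH C) (hn : dH C < n) :
    3 * dH C ≤ 2 * dSp C := by
  obtain ⟨z, hzC, hz⟩ := Submodule.exists_mem_ne_zero_of_ne_bot hC
  obtain ⟨x, ⟨hxC, hx⟩, hxe⟩ : dSp C ∈ wtSp '' {x | x ∈ C ∧ x ≠ 0} :=
    Nat.sInf_mem ⟨_, z, ⟨hzC, hz⟩, rfl⟩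
  obtain ⟨y, ⟨hyC, hy⟩, hye⟩ : dH C ∈ wtH '' {x | x ∈ C ∧ x ≠ 0} :=
    Nat.sInf_mem ⟨_, z, ⟨hzC, hz⟩, rfl⟩
  rw [← hxe]
  by_cases hr : R x + x = 0
  · have hyr : R y + y ≠ 0 := by
      intro hyr
      have := (full_of_R_add y hyr hy).1
      omega
    have h1 := three_dH_le hcyc hyC hy hyr
    have h2 := wtSp_le_n y
    have h3 := (full_of_R_add x hr hx).2
    omega
  · exact three_dH_le hcyc hxC hx hr
end

section
/- Let C₁ and C₂ be binary linear codes of length n with C₂ ⊆ C₁ (so C₁^⊥ ⊆ C₂^⊥). Then every pair (a | b) ∈ 𝔽₂ⁿ × 𝔽₂ⁿ with a ∈ C₂^⊥ and b ∈ C₁ which does NOT satisfy both a ∈ C₁^⊥ and b ∈ C₂ has symplectic weight wt_symp(a | b) ≥ min{d_H(C₁), d_H(C₂^⊥)}. (This is the classical content of the CSS construction: the minimum symplectic weight of S^⊥_symp \ S, where S = C₁^⊥ × C₂, is at least min{d_H(C₁), d_H(C₂^⊥)}.) -/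
/-- CSS construction: if C₂ ⊆ C₁, then every (a | b) with a ∈ C₂^⊥, b ∈ C₁
not satisfying both a ∈ C₁^⊥ and b ∈ C₂ has wt_symp(a|b) ≥ min{d_H(C₁), d_H(C₂^⊥)}. -/
theorem css_min_symplectic_weight (n : ℕ)
    (C₁ C₂ : Submodule (ZMod 2) (Fin n → ZMod 2)) (h : C₂ ≤ C₁)
    (a b : Fin n → ZMod 2) (ha : a ∈ dualCode C₂) (hb : b ∈ C₁)
    (hnot : ¬(a ∈ dualCode C₁ ∧ b ∈ C₂)) :
    min (dH C₁) (dH (dualCode C₂)) ≤ wtSymp a b := by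
  by_cases ha0 : a = 0
  · have hb0 : b ≠ 0 := by
      rintro rfl
      subst ha0
      exact hnot ⟨Submodule.zero_mem _, Submodule.zero_mem _⟩
    refine (min_le_left _ _).trans (le_trans (Nat.sInf_le (Set.mem_image_of_mem wtH (Set.mem_setOf.mpr ⟨hb, hb0⟩))) ?_)
    refine Finset.card_le_card fun i hi => ?_
    simp only [Finset.mem_filter, Finset.mem_univ, true_and, ne_eq, Prod.mk.injEq, not_and] at hi ⊢
    exact fun _ => hi
  · refine (min_le_right _ _).trans (le_trans (Nat.sInf_le (Set.mem_image_of_mem wtH (Set.mem_setOf.mpr ⟨ha, ha0⟩))) ?_)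
    refine Finset.card_le_card fun i hi => ?_
    simp only [Finset.mem_filter, Finset.mem_univ, true_and, ne_eq, Prod.mk.injEq, not_and] at hi ⊢
    exact fun h => absurd h hi
end
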